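/- For every tree T=(V,E), every set P of pebbles and set H of holes with |H| ≥ c(T), and all valid initial and final configurations Aˢ and Aᵗ, there exists a plan f such that ρ(Aˢ,f)(p) = Aᵗ(p) for every pebble p ∈ P; i.e., the assumption |H| ≥ c(T) is sufficient for the feasibility of every pebble motion instance on a tree. -/

import Mathlib

/-!
The identity of the holes is irrelevant, so only pebble placements `P → V` are considered (`Step`,
`Reach`). Pebbles can be shifted along walks, so the unlabelled problem is always solvable
(`exists_reach_occupied`), and it remains to permute the pebbles, that is, to exchange any two of
them (`reach_of_exch`). Moves are reversible, and whether a move is allowed depends only on the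
occupied set. Therefore exchangeability of two labels does not change when the pebbles are moved
(`Exch.of_reach`), and it is transitive (`Exch.trans`).

On a path graph `c₁ = |V| - 1`, so there is at most one pebble (`card_le_of_isPathGraph`).
Otherwise root the tree at a junction `r` (`exists_junction`) and delete vertices in order of
decreasing depth. The claim that all pebbles in the remaining set `W` are exchangeable inside `W`,
provided `W` contains at least `h = |H|` holes, is proved by induction on `|W|` (`exch_of_family`).
Let `ℓ` be a deepest vertex of `W`. With a pebble `r₁` parked at `ℓ`, the others are exchangeable
by induction. If `ℓ` is joined to a junction of `W` by a walk of length less than `h` (`Access`),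
there are enough holes to clear that walk, drive `r₁` into one branch of the junction, and bring
another pebble `q` from a second branch to `ℓ` (`exists_park`). Then all pebbles but `q` are
exchangeable as well, and a third pebble links `r₁` to `q`. If there is no third pebble, `r₁` and
`q` have free space to complete their exchange directly.

The constant `c(T)` enters only in `Layered.access`, which provides that walk. Going up from `ℓ`,
let `j` be the first vertex with three neighbours in `W`. Since `W` contains all vertices less deep
than `ℓ`, the parent of `ℓ` is its only ancestor that can be a junction of the tree without being
one of `W`. Either `ℓ` and `j` lie on a common corridor, so their distance is at most
`c₁ ≤ h - 1`, or the parent of `ℓ` and `j` are the ends of a corridor between junctions and the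
distance is at most `c₂ + 1 ≤ h - 1`; the parent may also be `j` itself.
-/

namespace PMT

variable {V P H : Type}

/-- A configuration assigns to each pebble or hole a vertex, bijectively. -/
abbrev Config (P H V : Type) : Type := (P ⊕ H) ≃ V

/- Apply a single move `u → v`: applicable iff `(u,v)` is an edge and the occupant of `v`
is a hole; applying it swaps the occupants of `u` and `v`. -/
open Classical in
noncomputable def applyMove (G : SimpleGraph V) (A : Config P H V) (m : V × V) :
    Option (Config P H V) :=
  if G.Adj m.1 m.2 ∧ (A.symm m.2).isRight = true then
    some (A.trans (Equiv.swap m.1 m.2))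
  else
    none

/-- Apply a plan (finite list of moves) in order; defined (`some`) only when each
successive move is applicable. -/
noncomputable def applyPlan (G : SimpleGraph V) :
    Config P H V → List (V × V) → Option (Config P H V)
  | A, [] => some A
  | A, m :: f => (applyMove G A m).bind fun B => applyPlan G B f

/-- The degree of a vertex (number of neighbors). -/
noncomputable def deg (G : SimpleGraph V) (v : V) : ℕ := (G.neighborSet v).ncard

/-- A corridor: a (nontrivial) path whose endpoints have degree different from 2 and
whose internal vertices all have degree exactly 2. -/
def IsCorridor (G : SimpleGraph V) {a b : V} (p : G.Walk a b) : Prop :=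
  p.IsPath ∧ 1 ≤ p.length ∧ deg G a ≠ 2 ∧ deg G b ≠ 2 ∧
    ∀ x ∈ p.support, x ≠ a → x ≠ b → deg G x = 2

/-- `c₁(T)`: the maximum length of a corridor. -/
noncomputable def c1 (G : SimpleGraph V) : ℕ :=
  sSup {n | ∃ (a b : V) (p : G.Walk a b), IsCorridor G p ∧ p.length = n}

/-- `c₂(T)`: the maximum length of a corridor both of whose endpoints are junctions
(vertices of degree greater than 2); `0` if no such corridor exists. -/
noncomputable def c2 (G : SimpleGraph V) : ℕ :=
  sSup {n | ∃ (a b : V) (p : G.Walk a b),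
    IsCorridor G p ∧ 2 < deg G a ∧ 2 < deg G b ∧ p.length = n}

/-- A path graph: all vertices lie on a single path. -/
def IsPathGraph (G : SimpleGraph V) : Prop :=
  ∃ (a b : V) (p : G.Walk a b), p.IsPath ∧ ∀ x : V, x ∈ p.support

/- The constant `c(T)`: `c₁(T)` if `T` is a path graph,
`max (c₁(T)+1) (c₂(T)+2)` otherwise. -/
open Classical in
noncomputable def cT (G : SimpleGraph V) : ℕ :=
  if IsPathGraph G then c1 G else max (c1 G + 1) (c2 G + 2)

end PMT

namespace PMT

/-! ### Moves of pebble placements -/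

section Motion

open Classical

variable {V P : Type} {G : SimpleGraph V} {W W' : Finset V} {g g' g'' : P → V}

/-- One move inside the vertex set `W`, seen on pebble placements `P → V` only: the occupant of
`u`, if any, moves to the adjacent unoccupied vertex `v`. The identity of the holes is
forgotten. -/
def Step (G : SimpleGraph V) (W : Finset V) (g g' : P → V) : Prop :=
  ∃ u ∈ W, ∃ v ∈ W, G.Adj u v ∧ (∀ p, g p ≠ v) ∧ g' = Equiv.swap u v ∘ g

/-- Reachability of pebble placements by moves inside `W`. -/
abbrev Reach (G : SimpleGraph V) (W : Finset V) : (P → V) → (P → V) → Prop :=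
  Relation.ReflTransGen (Step G W)

theorem Step.symm (h : Step G W g g') : Step G W g' g := by
  obtain ⟨u, hu, v, hv, huv, hf, rfl⟩ := h
  refine ⟨v, hv, u, hu, huv.symm, fun p hp => hf p ?_, ?_⟩
  · have := congrArg (Equiv.swap u v) hp
    simpa using this
  · funext p
    simp [Equiv.swap_comm v u]

theorem Reach.symm (h : Reach G W g g') : Reach G W g' g := by
  induction h with
  | refl => exact .refl
  | tail _ h ih => exact (Relation.ReflTransGen.single h.symm).trans ih

theorem Reach.mono (hW : W ⊆ W') (h : Reach G W g g') : Reach G W' g g' := by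
  induction h with
  | refl => exact .refl
  | tail _ h ih =>
    obtain ⟨u, hu, v, hv, r⟩ := h
    exact ih.tail ⟨u, hW hu, v, hW hv, r⟩

/-- Moves only see which vertices are occupied, so a plan stays valid after relabelling the
pebbles. -/
theorem Reach.relabel (σ : P → P) (h : Reach G W g g') : Reach G W (g ∘ σ) (g' ∘ σ) := by
  induction h with
  | refl => exact .refl
  | tail _ h ih =>
    obtain ⟨u, hu, v, hv, huv, hf, rfl⟩ := h
    exact ih.tail ⟨u, hu, v, hv, huv, fun p => hf _, rfl⟩

theorem Reach.injective (h : Reach G W g g') (hg : g.Injective) : g'.Injective := by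
  induction h with
  | refl => exact hg
  | tail _ h ih =>
    obtain ⟨u, hu, v, hv, huv, hf, rfl⟩ := h
    exact (Equiv.injective _).comp ih

theorem swap_mem_iff {u v x : V} (hu : u ∈ W) (hv : v ∈ W) : Equiv.swap u v x ∈ W ↔ x ∈ W := by
  rw [Equiv.swap_apply_def]
  split_ifs <;> simp_all

theorem Reach.mem_iff (h : Reach G W g g') (p : P) : g' p ∈ W ↔ g p ∈ W := by
  induction h with
  | refl => rfl
  | tail _ h ih =>
    obtain ⟨u, hu, v, hv, huv, hf, rfl⟩ := h
    exact (swap_mem_iff hu hv).trans ih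

/-- If `u` is occupied and `v` is not, then the occupied set can be changed by exchanging `u`
for `v`: along a walk from `u` to `v`, every pebble is shifted up to the next one. -/
theorem exists_shift {u v : V} (w : G.Walk u v) (g : P → V) (hw : ∀ x ∈ w.support, x ∈ W)
    (hu : u ∈ Set.range g) (hv : v ∉ Set.range g) :
    ∃ g', Reach G W g g' ∧ Set.range g' = insert v (Set.range g \ {u}) := by
  induction w generalizing g with
  | nil => exact absurd hu hv
  | @cons u x v h w ih =>
    have huW : u ∈ W := hw u (by simp)
    have hxW : x ∈ W := hw x (by simp)
    have hw' : ∀ y ∈ w.support, y ∈ W := fun y hy => hw y (by simp [hy])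
    have huv : u ≠ v := by rintro rfl; exact hv hu
    have hux : u ≠ x := h.ne
    -- moving the occupant of `u` to a free vertex `x`
    have key : ∀ k : P → V, u ∈ Set.range k → x ∉ Set.range k →
        Step G W k (Equiv.swap u x ∘ k) ∧
          Set.range (Equiv.swap u x ∘ k) = insert x (Set.range k \ {u}) := by
      intro k hk hx
      refine ⟨⟨u, huW, x, hxW, h, fun p hp => hx ⟨p, hp⟩, rfl⟩, ?_⟩
      rw [Set.range_comp]
      ext y
      rw [Equiv.image_eq_preimage_symm, Set.mem_preimage, Equiv.symm_swap, Equiv.swap_apply_def]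
      split_ifs with h1 h2
      · subst h1; simp [hx, hux]
      · subst h2; simp [hk]
      · simp [h1, h2]
    by_cases hx : x ∈ Set.range g
    · obtain ⟨g1, h1, r1⟩ := ih g hw' hx hv
      have hu1 : u ∈ Set.range g1 := by rw [r1]; simp [hux, hu]
      have hxv : x ≠ v := by rintro rfl; exact hv hx
      have hx1 : x ∉ Set.range g1 := by rw [r1]; simp [hxv]
      obtain ⟨h2, r2⟩ := key g1 hu1 hx1
      refine ⟨_, h1.tail h2, ?_⟩
      rw [r2, r1]
      ext y
      by_cases hyx : y = x
      · subst hyx; simp [hx, hux.symm]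
      · by_cases hyv : y = v
        · subst hyv; simp [huv.symm]
        · simp [hyx, hyv]
    · obtain ⟨h2, r2⟩ := key g hu hx
      by_cases hxv : x = v
      · subst hxv
        exact ⟨_, .single h2, r2⟩
      · obtain ⟨g1, h1, r1⟩ := ih _ hw' (by rw [r2]; simp)
          (by rw [r2]; simp [Ne.symm hxv, hv])
        refine ⟨g1, (Relation.ReflTransGen.single h2).trans h1, ?_⟩
        rw [r1, r2]
        ext y
        by_cases hyx : y = x
        · subst hyx; simp [hx, hxv]
        · simp [hyx]

/-- Any two vertices of `W` are joined by a walk inside `W`. -/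
def Conn (G : SimpleGraph V) (W : Finset V) : Prop :=
  ∀ u ∈ W, ∀ v ∈ W, ∃ w : G.Walk u v, ∀ x ∈ w.support, x ∈ W

/-- The unlabelled problem is always solvable: in a connected `W` the occupied set can be made
any prescribed subset of the right size. -/
theorem exists_reach_occupied [Fintype P] (hc : Conn G W) (g : P → V) (hg : g.Injective)
    (S : Finset V) (hS : S ⊆ W) (hcard : S.card = (Finset.univ.filter fun p => g p ∈ W).card) :
    ∃ g', Reach G W g g' ∧ ∀ v ∈ W, v ∈ S ↔ v ∈ Set.range g' := by
  obtain ⟨n, hn⟩ : ∃ n, (S.filter fun v => v ∉ Set.range g).card = n := ⟨_, rfl⟩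
  induction n generalizing g with
  | zero =>
    refine ⟨g, .refl, ?_⟩
    rw [Finset.card_eq_zero, Finset.filter_eq_empty_iff] at hn
    push Not at hn
    have : S = (Finset.univ.filter fun p => g p ∈ W).image g := by
      refine Finset.eq_of_subset_of_card_le (fun v hv => ?_) ?_
      · obtain ⟨p, rfl⟩ := hn hv
        simp only [Finset.mem_image, Finset.mem_filter, Finset.mem_univ, true_and]
        exact ⟨p, hS hv, rfl⟩
      · rw [Finset.card_image_of_injective _ hg, hcard]
    intro v hv
    refine ⟨fun h => hn h, ?_⟩
    rintro ⟨p, rfl⟩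
    rw [this]
    simp only [Finset.mem_image, Finset.mem_filter, Finset.mem_univ, true_and]
    exact ⟨p, hv, rfl⟩
  | succ n ih =>
    obtain ⟨v, hv⟩ : (S.filter fun v => v ∉ Set.range g).Nonempty := by
      rw [← Finset.card_pos]; omega
    rw [Finset.mem_filter] at hv
    obtain ⟨u, huR, huS⟩ : ∃ u ∈ (Finset.univ.filter fun p => g p ∈ W).image g, u ∉ S := by
      by_contra! hsub
      have heq := Finset.eq_of_subset_of_card_le (s := (Finset.univ.filter fun p => g p ∈ W).image g)
        (t := S) hsub (by rw [Finset.card_image_of_injective _ hg, hcard])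
      rw [← heq] at hv
      simp only [Finset.mem_image, Finset.mem_filter, Finset.mem_univ, true_and] at hv
      obtain ⟨⟨p, -, hp⟩, h2⟩ := hv
      exact h2 ⟨p, hp⟩
    simp only [Finset.mem_image, Finset.mem_filter, Finset.mem_univ, true_and] at huR
    obtain ⟨p, hpW, rfl⟩ := huR
    obtain ⟨w, hw⟩ := hc _ hpW v (hS hv.1)
    obtain ⟨g1, h1, r1⟩ := exists_shift w g hw ⟨p, rfl⟩ hv.2
    obtain ⟨g2, h2, r2⟩ := ih g1 (h1.injective hg) (by simp only [h1.mem_iff, hcard]) (by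
      have : (S.filter fun v => v ∉ Set.range g1) = (S.filter fun v => v ∉ Set.range g).erase v := by
        ext y
        rw [Finset.mem_erase, Finset.mem_filter, Finset.mem_filter, r1]
        by_cases hy : y = g p
        · subst hy; simp [huS]
        · simp [hy]; tauto
      rw [this, Finset.card_erase_of_mem (Finset.mem_filter.2 hv), hn]; rfl)
    exact ⟨g2, h1.trans h2, r2⟩

/-- A pebble can be moved along a walk that meets no other pebble. -/
theorem reach_update {u v : V} (w : G.Walk u v) (g : P → V) (p : P) (hp : g p = u)
    (hw : ∀ x ∈ w.support, x ∈ W) (hf : ∀ x ∈ w.support, ∀ q, q ≠ p → g q ≠ x) :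
    Reach G W g (Function.update g p v) := by
  induction w generalizing g with
  | nil => rw [← hp, Function.update_eq_self]
  | @cons u x v h w ih =>
    have h1 : Step G W g (Function.update g p x) := by
      refine ⟨u, hw u (by simp), x, hw x (by simp), h, fun q hq => ?_, ?_⟩
      · by_cases hqp : q = p
        · subst hqp; exact h.ne (hp.symm.trans hq)
        · exact hf x (by simp) q hqp hq
      · funext q
        by_cases hqp : q = p
        · subst hqp; simp [hp]
        · rw [Function.update_of_ne hqp, Function.comp_apply, Equiv.swap_apply_of_ne_of_ne]
          · exact hf u (by simp) q hqp
          · exact hf x (by simp) q hqp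
    have h2 := ih (Function.update g p x) (by simp) (fun y hy => hw y (by simp [hy]))
      (fun y hy q hq => by
        rw [Function.update_of_ne hq]; exact hf y (by simp [hy]) q hq)
    rw [Function.update_idem] at h2
    exact (Relation.ReflTransGen.single h1).trans h2

/-! ### Exchanging pebbles -/

/-- Pebbles `p` and `q` can be exchanged, all others returning to their places. -/
def Exch (G : SimpleGraph V) (W : Finset V) (g : P → V) (p q : P) : Prop :=
  Reach G W g (g ∘ Equiv.swap p q)

theorem Exch.symm {p q : P} (h : Exch G W g p q) : Exch G W g q p := by
  rw [Exch, Equiv.swap_comm]; exact h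

/-- Exchangeability is constant along reachability: move, exchange, and move back. -/
theorem Exch.of_reach {p q : P} (h : Reach G W g g') (h' : Exch G W g' p q) : Exch G W g p q :=
  (Relation.ReflTransGen.trans h h').trans (h.relabel _).symm

theorem Exch.trans {p q s : P} (hpq : p ≠ q) (hps : p ≠ s)
    (h1 : Exch G W g p q) (h2 : Exch G W g q s) : Exch G W g p s := by
  have h3 : Reach G W g (g ∘ Equiv.swap q s ∘ Equiv.swap p q ∘ Equiv.swap q s) := by
    refine Relation.ReflTransGen.trans h2 ?_
    have := Reach.relabel (Equiv.swap q s)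
      (Relation.ReflTransGen.trans h1 (Reach.relabel (Equiv.swap p q) h2))
    simpa [Function.comp_assoc] using this
  have e : Equiv.swap q s * Equiv.swap p q * Equiv.swap q s = Equiv.swap p s := by
    rw [Equiv.swap_mul_swap_mul_swap hpq hps]
    exact Equiv.swap_comm _ _
  have e' : (⇑(Equiv.swap q s) ∘ ⇑(Equiv.swap p q) ∘ ⇑(Equiv.swap q s)) = ⇑(Equiv.swap p s) := by
    rw [← e]; rfl
  rw [e'] at h3
  exact h3

/-! ### Parking a pebble near a junction -/

/-- From `ℓ ∈ W` a junction `j` of `W` can be reached inside `W` by a walk of length less than `h`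
that avoids two neighbours `a`, `b` of `j` in `W`. Making the walk and `a` free (except at `ℓ`
itself) needs at most `h` holes. -/
def Access (G : SimpleGraph V) (W : Finset V) (h : ℕ) (l : V) : Prop :=
  ∃ (j a b : V) (w : G.Walk l j), j ≠ l ∧ w.length + 1 ≤ h ∧ (∀ x ∈ w.support, x ∈ W) ∧ a ∈ W ∧
    b ∈ W ∧ G.Adj j a ∧ G.Adj j b ∧ a ≠ b ∧ a ∉ w.support ∧ b ∉ w.support

/-- With `h` holes in `W`, the pebble `r` parked at `ℓ` can be driven to a branch `a` at the
junction, whereupon another pebble `q` coming from the branch `b` takes its place at `ℓ`. If these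
are the only two pebbles in `W`, then `r` can go on to `b`, so that they get exchanged. -/
theorem exists_park [Fintype P] {h : ℕ} {l : V} (hc : Conn G W) (hl : Access G W h l)
    (g : P → V) (hg : g.Injective) (h2 : 2 ≤ (Finset.univ.filter fun p => g p ∈ W).card)
    (hh : h + (Finset.univ.filter fun p => g p ∈ W).card ≤ W.card) :
    ∃ (g1 g2 : P → V) (r q : P), Reach G W g g1 ∧ Reach G W g g2 ∧ r ≠ q ∧ g1 r = l ∧ g2 q = l ∧
      ((Finset.univ.filter fun p => g p ∈ W).card = 2 → Exch G W g r q) := by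
  obtain ⟨j, a, b, w, hjl, hwl, hwW, haW, hbW, hja, hjb, hab, haw, hbw⟩ := hl
  have hlw : l ∈ w.support := w.start_mem_support
  have hal : a ≠ l := by rintro rfl; exact haw hlw
  have hbl : b ≠ l := by rintro rfl; exact hbw hlw
  -- the vertices that must be unoccupied before `r` starts to move
  let D : Finset V := (insert a w.support.toFinset).erase l
  have hDcard : D.card ≤ h := by
    have h1 : D.card = (insert a w.support.toFinset).card - 1 :=
      Finset.card_erase_of_mem (by simp)
    have h3 := Finset.card_insert_le a w.support.toFinset
    have h4 := List.toFinset_card_le w.support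
    rw [SimpleGraph.Walk.length_support] at h4
    omega
  have hsub : ({l, b} : Finset V) ⊆ W \ D := by
    intro x hx
    rw [Finset.mem_insert, Finset.mem_singleton] at hx
    rw [Finset.mem_sdiff]
    rcases hx with rfl | rfl
    · exact ⟨hwW _ hlw, by simp [D]⟩
    · exact ⟨hbW, by simp [D, hbw, hab.symm]⟩
  obtain ⟨S, hS1, hS2, hS3⟩ := Finset.exists_subsuperset_card_eq hsub
    (n := (Finset.univ.filter fun p => g p ∈ W).card)
    (by rw [Finset.card_pair hbl.symm]; exact h2)
    (by have := Finset.le_card_sdiff D W; omega)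
  obtain ⟨g1, hr1, hg1⟩ := exists_reach_occupied hc g hg S
    (hS2.trans Finset.sdiff_subset) hS3
  have inj1 : g1.Injective := hr1.injective hg
  have hfree : ∀ x ∈ insert a w.support.toFinset, x ≠ l → ∀ p, g1 p ≠ x := by
    intro x hx hxl p hp
    have hxW : x ∈ W := by
      rw [Finset.mem_insert, List.mem_toFinset] at hx
      rcases hx with rfl | hx
      · exact haW
      · exact hwW _ hx
    have := hS2 ((hg1 x hxW).2 ⟨p, hp⟩)
    rw [Finset.mem_sdiff] at this
    exact this.2 (Finset.mem_erase.2 ⟨hxl, hx⟩)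
  have hfa : ∀ p, g1 p ≠ a := hfree a (by simp) hal
  have hfw : ∀ x ∈ w.support, x ≠ l → ∀ p, g1 p ≠ x := fun x hx => hfree x (by simp [hx])
  obtain ⟨r, hr⟩ := (hg1 l (hwW _ hlw)).1 (hS1 (by simp))
  obtain ⟨q, hq⟩ := (hg1 b hbW).1 (hS1 (by simp))
  have hrq : r ≠ q := by rintro rfl; exact hbl (hq.symm.trans hr)
  have step1 : Reach G W g1 (Function.update g1 r a) := by
    refine reach_update (w.concat hja) g1 r hr (fun x hx => ?_) (fun x hx p hp e => ?_)
    · rw [SimpleGraph.Walk.support_concat, List.mem_append, List.mem_singleton] at hx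
      rcases hx with hx | rfl
      · exact hwW _ hx
      · exact haW
    · rw [SimpleGraph.Walk.support_concat, List.mem_append, List.mem_singleton] at hx
      rcases hx with hx | rfl
      · by_cases hxl : x = l
        · subst hxl; exact hp (inj1 (e.trans hr.symm))
        · exact hfw x hx hxl p e
      · exact hfa p e
  have step2 : Reach G W (Function.update g1 r a)
      (Function.update (Function.update g1 r a) q l) := by
    refine reach_update (SimpleGraph.Walk.cons hjb.symm w.reverse) _ q
      (by rw [Function.update_of_ne hrq.symm, hq]) (fun x hx => ?_) (fun x hx p hp e => ?_)
    · rw [SimpleGraph.Walk.support_cons, List.mem_cons, SimpleGraph.Walk.support_reverse,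
        List.mem_reverse] at hx
      rcases hx with rfl | hx
      · exact hbW
      · exact hwW _ hx
    · rw [SimpleGraph.Walk.support_cons, List.mem_cons, SimpleGraph.Walk.support_reverse,
        List.mem_reverse] at hx
      by_cases hpr : p = r
      · subst hpr
        rw [Function.update_self] at e
        subst e
        rcases hx with hx | hx
        · exact hab hx
        · exact haw hx
      · rw [Function.update_of_ne hpr] at e
        rcases hx with rfl | hx
        · exact hp (inj1 (e.trans hq.symm))
        · by_cases hxl : x = l
          · subst hxl; exact hpr (inj1 (e.trans hr.symm))
          · exact hfw x hx hxl p e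
  refine ⟨g1, _, r, q, hr1, (Relation.ReflTransGen.trans hr1 step1).trans step2, hrq, hr,
    Function.update_self .., fun hm => ?_⟩
  have hrW : r ∈ Finset.univ.filter fun p => g p ∈ W := by
    rw [Finset.mem_filter, ← hr1.mem_iff, hr]; exact ⟨Finset.mem_univ _, hwW _ hlw⟩
  have hqW : q ∈ Finset.univ.filter fun p => g p ∈ W := by
    rw [Finset.mem_filter, ← hr1.mem_iff, hq]; exact ⟨Finset.mem_univ _, hbW⟩
  have honly : ∀ p, g1 p ∈ W → p = r ∨ p = q := by
    intro p hp
    by_contra! hne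
    have : ({p, r, q} : Finset P) ⊆ Finset.univ.filter fun p => g p ∈ W := by
      intro y hy
      simp only [Finset.mem_insert, Finset.mem_singleton] at hy
      rcases hy with rfl | rfl | rfl
      · rw [Finset.mem_filter, ← hr1.mem_iff]; exact ⟨Finset.mem_univ _, hp⟩
      · exact hrW
      · exact hqW
    have := Finset.card_le_card this
    rw [Finset.card_eq_three.2 ⟨p, r, q, hne.1, hne.2, hrq, rfl⟩] at this
    omega
  have hjW : j ∈ W := hwW _ w.end_mem_support
  have step3 : Reach G W (Function.update (Function.update g1 r a) q l)
      (Function.update (Function.update (Function.update g1 r a) q l) r b) := by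
    refine reach_update (SimpleGraph.Walk.cons hja.symm (SimpleGraph.Walk.cons hjb .nil)) _ r
      (by rw [Function.update_of_ne hrq, Function.update_self]) (fun x hx => ?_)
      (fun x hx p hp e => ?_)
    · simp at hx
      rcases hx with rfl | rfl | rfl <;> assumption
    · have hx' : x = a ∨ x = j ∨ x = b := by simpa using hx
      by_cases hpq : p = q
      · subst hpq
        rw [Function.update_self] at e
        subst e
        rcases hx' with h' | h' | h'
        · exact hal h'.symm
        · exact hjl h'.symm
        · exact hbl h'.symm
      · rw [Function.update_of_ne hpq, Function.update_of_ne hp] at e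
        have : g1 p ∈ W := by
          rw [e]; rcases hx' with rfl | rfl | rfl <;> assumption
        rcases honly p this with h' | h'
        · exact hp h'
        · exact hpq h'
  have hfin : Function.update (Function.update (Function.update g1 r a) q l) r b =
      g1 ∘ Equiv.swap r q := by
    funext p
    by_cases hpr : p = r
    · subst hpr; simp [hq]
    · by_cases hpq : p = q
      · subst hpq; simp [hrq.symm, hr]
      · simp [hpr, hpq, Equiv.swap_apply_of_ne_of_ne hpr hpq]
  refine Exch.of_reach hr1 ?_
  rw [Exch, ← hfin]
  exact (step1.trans step2).trans step3

/-! ### Induction over the vertices, and all permutations -/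

/-- If vertices can be deleted from `W` one after another, each deleted vertex having access to a
junction at that moment, then any two pebbles of `W` can be exchanged: with some pebble parked at
the deleted vertex the others are exchangeable by induction, and a second pebble can be parked
there instead. -/
theorem exch_of_family [Fintype P] {h : ℕ} (h2 : 2 ≤ h) (F : Finset V → Prop)
    (hconn : ∀ W, F W → Conn G W)
    (hF : ∀ W, F W → 4 ≤ W.card → ∃ l ∈ W, Access G W h l ∧ F (W.erase l))
    (n : ℕ) : ∀ W : Finset V, W.card = n → F W → ∀ g : P → V, g.Injective →
      h + (Finset.univ.filter fun p => g p ∈ W).card ≤ W.card →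
      ∀ p q : P, p ≠ q → g p ∈ W → g q ∈ W → Exch G W g p q := by
  induction n with
  | zero =>
    intro W hW _ g _ hh
    omega
  | succ n ih =>
    intro W hWn hFW g hg hh p q hpq hp hq
    have hm : 2 ≤ (Finset.univ.filter fun p => g p ∈ W).card := by
      rw [← Finset.card_pair hpq]
      refine Finset.card_le_card fun y hy => ?_
      rw [Finset.mem_insert, Finset.mem_singleton] at hy
      rw [Finset.mem_filter]
      rcases hy with rfl | rfl
      · exact ⟨Finset.mem_univ _, hp⟩
      · exact ⟨Finset.mem_univ _, hq⟩
    obtain ⟨l, hlW, hl, hFl⟩ := hF W hFW (by omega)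
    obtain ⟨g1, g2, r, s, hr1, hr2, hrs, hl1, hl2, htwo⟩ := exists_park (hconn W hFW) hl g hg hm hh
    -- pebbles other than the parked one are exchangeable
    have park : ∀ (k : P → V) (t : P), Reach G W g k → k t = l →
        ∀ x y, x ≠ y → g x ∈ W → g y ∈ W → x ≠ t → y ≠ t → Exch G W g x y := by
      intro k t hk ht x y hxy hx hy hxt hyt
      have kinj : k.Injective := hk.injective hg
      have hmem : ∀ z, g z ∈ W → z ≠ t → k z ∈ W.erase l := fun z hz hzt =>
        Finset.mem_erase.2 ⟨fun e => hzt (kinj (e.trans ht.symm)), (hk.mem_iff z).2 hz⟩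
      have hcount : (Finset.univ.filter fun p => k p ∈ W.erase l) =
          (Finset.univ.filter fun p => g p ∈ W).erase t := by
        ext z
        simp only [Finset.mem_filter, Finset.mem_univ, true_and, Finset.mem_erase]
        rw [hk.mem_iff z, ← ht, kinj.ne_iff]
      have htW : t ∈ Finset.univ.filter fun p => g p ∈ W := by
        rw [Finset.mem_filter, ← hk.mem_iff, ht]; exact ⟨Finset.mem_univ _, hlW⟩
      refine Exch.of_reach hk (Reach.mono (Finset.erase_subset l W) ?_)
      refine ih (W.erase l) (by rw [Finset.card_erase_of_mem hlW, hWn]; rfl) hFl k kinj ?_ x y hxy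
        (hmem x hx hxt) (hmem y hy hyt)
      rw [hcount, Finset.card_erase_of_mem htW, Finset.card_erase_of_mem hlW]
      omega
    have hrW : g r ∈ W := by rw [← hr1.mem_iff, hl1]; exact hlW
    have hsW : g s ∈ W := by rw [← hr2.mem_iff, hl2]; exact hlW
    have hex : Exch G W g r s := by
      by_cases hm2 : (Finset.univ.filter fun p => g p ∈ W).card = 2
      · exact htwo hm2
      -- a third pebble links `r` and `s`
      obtain ⟨t, ht, htrs⟩ := Finset.exists_mem_notMem_of_card_lt_card
        (s := {r, s}) (t := Finset.univ.filter fun p => g p ∈ W)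
        (by rw [Finset.card_pair hrs]; omega)
      simp only [Finset.mem_insert, Finset.mem_singleton, not_or] at htrs
      have htW : g t ∈ W := (Finset.mem_filter.1 ht).2
      exact Exch.trans (Ne.symm htrs.1) hrs
        (park g2 s hr2 hl2 r t (Ne.symm htrs.1) hrW htW hrs htrs.2)
        (park g1 r hr1 hl1 t s htrs.2 htW hsW htrs.1 hrs.symm)
    by_cases hr : p = r ∨ q = r
    · by_cases hs : p = s ∨ q = s
      · rcases hr with rfl | rfl
        · rcases hs with rfl | rfl
          · exact absurd rfl hrs
          · exact hex
        · rcases hs with rfl | rfl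
          · exact hex.symm
          · exact absurd rfl hrs
      · push Not at hs
        exact park g2 s hr2 hl2 p q hpq hp hq hs.1 hs.2
    · push Not at hr
      exact park g1 r hr1 hl1 p q hpq hp hq hr.1 hr.2

/-- Exchanges generate all permutations, so together with the solvability of the unlabelled
problem they solve every labelled problem. -/
theorem reach_of_exch [Fintype V] [Fintype P] (hc : Conn G (Finset.univ : Finset V))
    (hex : ∀ (g : P → V), g.Injective → ∀ p q, p ≠ q → Exch G Finset.univ g p q)
    (g t : P → V) (hg : g.Injective) (ht : t.Injective) : Reach G Finset.univ g t := by
  obtain ⟨g1, h1, r1⟩ := exists_reach_occupied hc g hg (Finset.univ.image t)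
    (Finset.subset_univ _) (by rw [Finset.card_image_of_injective _ ht]; simp)
  have hmem : ∀ p, t p ∈ Set.range g1 := fun p =>
    (r1 (t p) (Finset.mem_univ _)).1 (Finset.mem_image_of_mem _ (Finset.mem_univ p))
  choose σ hσ using hmem
  have σinj : σ.Injective := fun x y e => ht (by rw [← hσ x, ← hσ y, e])
  have perm : ∀ τ : Equiv.Perm P, ∀ k : P → V, k.Injective → Reach G Finset.univ k (k ∘ τ) := by
    intro τ
    induction τ using Equiv.Perm.swap_induction_on with
    | one => intro k _; exact .refl
    | swap_mul f x y hxy ih =>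
      intro k hk
      exact (Relation.ReflTransGen.trans (ih k hk)
        (Reach.relabel f (hex k hk x y hxy)))
  have e : t = g1 ∘ Equiv.ofBijective σ (Finite.injective_iff_bijective.1 σinj) := by
    funext p; exact (hσ p).symm
  rw [e]
  exact Relation.ReflTransGen.trans h1 (perm _ g1 (h1.injective hg))

/-- A placement plan is realised by a plan for configurations. -/
theorem exists_plan {H : Type} [Fintype V] (A : Config P H V) (t : P → V)
    (h : Reach G Finset.univ (fun p => A (Sum.inl p)) t) :
    ∃ (f : List (V × V)) (B : Config P H V), applyPlan G A f = some B ∧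
      ∀ p : P, B (Sum.inl p) = t p := by
  obtain ⟨g, hg⟩ : ∃ g : P → V, g = fun p => A (Sum.inl p) := ⟨_, rfl⟩
  rw [← hg] at h
  induction h using Relation.ReflTransGen.head_induction_on generalizing A with
  | refl => exact ⟨[], A, rfl, fun p => by rw [hg]⟩
  | head h _ ih =>
    obtain ⟨u, -, v, -, huv, hf, rfl⟩ := h
    subst hg
    obtain ⟨f, B, hB, hBt⟩ := ih (A.trans (Equiv.swap u v)) rfl
    refine ⟨(u, v) :: f, B, ?_, hBt⟩
    have hv : (A.symm v).isRight = true := by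
      rcases hx : A.symm v with p | p
      · exact absurd (by change A (Sum.inl p) = v; rw [← hx]; simp) (hf p)
      · rfl
    simp [applyPlan, applyMove, huv, hv, hB]

end Motion

/-! ### Rooted trees and corridors -/

section Tree

open Classical

variable {V : Type} {G : SimpleGraph V} {r : V} {par : V → V}

/-- `par` sends each vertex other than the root `r` to its only neighbour closer to the root;
all its other neighbours are one step farther away. The depth of `v` is `G.dist r v`. -/
def IsPar (G : SimpleGraph V) (r : V) (par : V → V) : Prop :=
  ∀ v, v ≠ r → G.Adj v (par v) ∧ G.dist r (par v) + 1 = G.dist r v ∧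
    ∀ y, G.Adj v y → y ≠ par v → G.dist r y = G.dist r v + 1

theorem dist_eq_length_of_isPath (hT : G.IsTree) {u v : V} (p : G.Walk u v) (hp : p.IsPath) :
    G.dist u v = p.length := by
  obtain ⟨q, hq⟩ := hT.connected.exists_walk_length_eq_dist u v
  have hq' : q.IsPath := q.isPath_of_length_eq_dist hq
  have := (hT.existsUnique_path u v).unique hq' hp
  rw [← hq, this]

theorem exists_par (hT : G.IsTree) (r : V) : ∃ par, IsPar G r par := by
  have : ∀ v, ∃ u, v ≠ r → G.Adj v u ∧ G.dist r u + 1 = G.dist r v ∧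
    ∀ y, G.Adj v y → y ≠ u → G.dist r y = G.dist r v + 1 := by
    intro v
    obtain ⟨p, hp⟩ := hT.connected.exists_walk_length_eq_dist r v
    have hp' : p.IsPath := p.isPath_of_length_eq_dist hp
    -- a neighbour closer to the root precedes `v` on the path from the root
    have huniq : ∀ y, G.Adj v y → G.dist r y + 1 = G.dist r v → y = p.penultimate := by
      intro y hy hd
      obtain ⟨q, hq⟩ := hT.connected.exists_walk_length_eq_dist r y
      have hq' : (q.concat hy.symm).IsPath := by
        apply SimpleGraph.Walk.isPath_of_length_eq_dist
        rw [SimpleGraph.Walk.length_concat, hq, hd]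
      rw [← (hT.existsUnique_path r v).unique hq' hp', SimpleGraph.Walk.penultimate_concat]
    refine ⟨p.penultimate, fun hv => ?_⟩
    have hnil : ¬ p.Nil := fun h => hv h.eq.symm
    have hadj := (p.adj_penultimate hnil).symm
    refine ⟨hadj, ?_, ?_⟩
    · have h1 : G.dist r p.penultimate ≤ p.dropLast.length := SimpleGraph.dist_le _
      rw [SimpleGraph.Walk.length_dropLast] at h1
      have h2 : p.length ≠ 0 := fun h => hnil (SimpleGraph.Walk.length_eq_zero_iff.1 h)
      have h3 := hT.dist_eq_dist_add_one_of_adj r hadj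
      omega
    · intro y hy hne
      rcases hT.dist_eq_dist_add_one_of_adj r hy with h | h
      · exact absurd (huniq y hy h.symm) hne
      · exact h
  choose par hpar using this
  exact ⟨par, hpar⟩

theorem dist_root_eq_zero (hT : G.IsTree) {v : V} : G.dist r v = 0 ↔ v = r := by
  rw [hT.connected.dist_eq_zero_iff, eq_comm]

theorem ne_root_of_pos {v : V} (h : 0 < G.dist r v) : v ≠ r := by
  rintro rfl; simp at h

theorem IsPar.dist_iterate (hp : IsPar G r par) (k : ℕ) :
    ∀ v, k ≤ G.dist r v → G.dist r (par^[k] v) + k = G.dist r v := by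
  induction k with
  | zero => intro v _; rfl
  | succ k ih =>
    intro v hv
    have h := (hp v (ne_root_of_pos (G := G) (r := r) (by omega))).2.1
    have := ih (par v) (by omega)
    rw [Function.iterate_succ_apply]
    omega

theorem IsPar.adj_iterate (hp : IsPar G r par) {k : ℕ} {v : V} (hk : k < G.dist r v) :
    G.Adj (par^[k] v) (par^[k + 1] v) := by
  have h := hp.dist_iterate k v hk.le
  rw [Function.iterate_succ_apply']
  exact (hp _ (ne_root_of_pos (G := G) (r := r) (by omega))).1

/-- The path from `v` to its `k`-th ancestor. -/
theorem IsPar.exists_path (hp : IsPar G r par) (k : ℕ) : ∀ v, k ≤ G.dist r v →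
    ∃ w : G.Walk v (par^[k] v), w.IsPath ∧ w.length = k ∧
      ∀ x ∈ w.support, ∃ i ≤ k, x = par^[i] v := by
  induction k with
  | zero =>
    intro v _
    refine ⟨.nil, .nil, rfl, fun x hx => ⟨0, le_rfl, ?_⟩⟩
    simpa using hx
  | succ k ih =>
    intro v hv
    obtain ⟨h1, h2, -⟩ := hp v (ne_root_of_pos (G := G) (r := r) (by omega))
    obtain ⟨w, hw1, hw2, hw3⟩ := ih (par v) (by omega)
    rw [Function.iterate_succ_apply]
    refine ⟨SimpleGraph.Walk.cons h1 w, ?_, ?_, ?_⟩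
    · refine hw1.cons fun hx => ?_
      obtain ⟨i, hi, hvi⟩ := hw3 v hx
      have := hp.dist_iterate i (par v) (by omega)
      rw [← hvi] at this
      omega
    · rw [SimpleGraph.Walk.length_cons, hw2]
    · intro x hx
      rw [SimpleGraph.Walk.support_cons, List.mem_cons] at hx
      rcases hx with rfl | hx
      · exact ⟨0, by omega, rfl⟩
      · obtain ⟨i, hi, rfl⟩ := hw3 x hx
        exact ⟨i + 1, by omega, rfl⟩

theorem IsPar.isCorridor (hp : IsPar G r par) {v : V} {k : ℕ} (hk : 1 ≤ k)
    (hkv : k ≤ G.dist r v) (hv : deg G v ≠ 2) (hend : deg G (par^[k] v) ≠ 2)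
    (hint : ∀ i, 0 < i → i < k → deg G (par^[i] v) = 2) :
    ∃ w : G.Walk v (par^[k] v), IsCorridor G w ∧ w.length = k := by
  obtain ⟨w, hw1, hw2, hw3⟩ := hp.exists_path k v hkv
  refine ⟨w, ⟨hw1, by omega, hv, hend, fun x hx hxa hxb => ?_⟩, hw2⟩
  obtain ⟨i, hi, rfl⟩ := hw3 x hx
  refine hint i (Nat.pos_of_ne_zero ?_) (lt_of_le_of_ne hi ?_)
  · rintro rfl; exact hxa rfl
  · rintro rfl; exact hxb rfl

/-! ### Layered sets and access to junctions -/

/-- Vertex sets filled up layer by layer from the root. -/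
def Layered (G : SimpleGraph V) (r : V) (W : Finset V) : Prop :=
  r ∈ W ∧ ∀ x ∈ W, ∀ y, G.dist r y < G.dist r x → y ∈ W

theorem Layered.conn (hT : G.IsTree) (hp : IsPar G r par) {W : Finset V} (hW : Layered G r W) :
    Conn G W := by
  have key : ∀ u ∈ W, ∃ w : G.Walk u r, ∀ x ∈ w.support, x ∈ W := by
    intro u hu
    obtain ⟨w, -, -, hw⟩ := hp.exists_path (G.dist r u) u le_rfl
    have hend : par^[G.dist r u] u = r := by
      rw [← dist_root_eq_zero hT (r := r)]
      have := hp.dist_iterate (G.dist r u) u le_rfl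
      omega
    refine ⟨w.copy rfl hend, fun x hx => ?_⟩
    rw [SimpleGraph.Walk.support_copy] at hx
    obtain ⟨i, hi, rfl⟩ := hw x hx
    by_cases h0 : i = 0
    · subst h0; exact hu
    · have := hp.dist_iterate i u hi
      exact hW.2 u hu _ (by omega)
  intro u hu v hv
  obtain ⟨w1, h1⟩ := key u hu
  obtain ⟨w2, h2⟩ := key v hv
  refine ⟨w1.append w2.reverse, fun x hx => ?_⟩
  rw [SimpleGraph.Walk.mem_support_append_iff, SimpleGraph.Walk.support_reverse,
    List.mem_reverse] at hx
  exact hx.elim (h1 x) (h2 x)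

variable [Fintype V]

theorem length_le_c1 {a b : V} {p : G.Walk a b} (hp : IsCorridor G p) : p.length ≤ c1 G := by
  refine le_csSup ⟨Fintype.card V, ?_⟩ ⟨a, b, p, hp, rfl⟩
  rintro n ⟨a, b, p, hp, rfl⟩
  exact hp.1.length_lt.le

theorem length_le_c2 {a b : V} {p : G.Walk a b} (hp : IsCorridor G p) (ha : 2 < deg G a)
    (hb : 2 < deg G b) : p.length ≤ c2 G := by
  refine le_csSup ⟨Fintype.card V, ?_⟩ ⟨a, b, p, hp, ha, hb, rfl⟩
  rintro n ⟨a, b, p, hp, -, -, rfl⟩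
  exact hp.1.length_lt.le

theorem dist_lt_card (hT : G.IsTree) (u v : V) : G.dist u v < Fintype.card V := by
  obtain ⟨p, hp⟩ := hT.connected.exists_walk_length_eq_dist u v
  rw [← hp]
  exact (p.isPath_of_length_eq_dist hp).length_lt

theorem two_le_deg {v x y : V} (hx : G.Adj v x) (hy : G.Adj v y) (hxy : x ≠ y) :
    2 ≤ deg G v := by
  rw [deg, ← Set.ncard_pair hxy]
  refine Set.ncard_le_ncard ?_ (Set.toFinite _)
  rintro z (rfl | rfl) <;> assumption

/-- A path whose internal vertices have degree 2 and which starts at a vertex of degree other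
than 2 has length at most `c₁`, since it can be prolonged to a corridor. Here the path descends,
and it is prolonged by passing to children. -/
theorem IsPar.le_c1 (hT : G.IsTree) (hp : IsPar G r par) (m : ℕ) : ∀ (v : V) (k : ℕ),
    Fintype.card V ≤ G.dist r v + m → 1 ≤ k → k ≤ G.dist r v →
    (∀ i, 0 < i → i < k → deg G (par^[i] v) = 2) → deg G (par^[k] v) ≠ 2 → k ≤ c1 G := by
  induction m with
  | zero =>
    intro v k hm
    have := dist_lt_card hT r v
    omega
  | succ m ih =>
    intro v k hm hk hkv hint hend
    by_cases hv : deg G v = 2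
    · have hvr : v ≠ r := ne_root_of_pos (G := G) (r := r) (by omega)
      obtain ⟨y, hy, hyp⟩ : ∃ y, G.Adj v y ∧ y ≠ par v := by
        obtain ⟨a, b, hab, hN⟩ := Set.ncard_eq_two.1 hv
        have ha : G.Adj v a := by
          rw [← SimpleGraph.mem_neighborSet, hN]; simp
        have hb : G.Adj v b := by
          rw [← SimpleGraph.mem_neighborSet, hN]; simp
        by_cases h : a = par v
        · exact ⟨b, hb, fun h' => hab (h.trans h'.symm)⟩
        · exact ⟨a, ha, h⟩
      have hd := (hp v hvr).2.2 y hy hyp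
      have hpy : par y = v := by
        by_contra hne
        have := (hp y (ne_root_of_pos (G := G) (r := r) (by omega))).2.2 v hy.symm (Ne.symm hne)
        omega
      have := ih y (k + 1) (by omega) (by omega) (by omega) (fun i hi hik => by
          obtain ⟨i, rfl⟩ := Nat.exists_eq_add_of_le' hi
          rw [Function.iterate_add_apply, Function.iterate_one, hpy]
          by_cases h0 : i = 0
          · subst h0; exact hv
          · exact hint i (by omega) (by omega)) (by
          rw [Function.iterate_succ_apply, hpy]; exact hend)
      omega
    · obtain ⟨w, hw, hwl⟩ := hp.isCorridor hk hkv hv hend hint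
      rw [← hwl]
      exact length_le_c1 hw

/-- A deepest vertex `ℓ` of a layered set has access to a junction. Let `j` be its first ancestor
with three neighbours in `W`. All vertices strictly between `j` and the parent `x` of `ℓ` have
degree 2 in the tree. If `x` has degree 2 as well, then `ℓ` and `j` lie in one corridor and their
distance is at most `c₁`. Otherwise (`x` may have further children outside `W`) the path from `x`
to `j` is a corridor between junctions and the distance is at most `c₂ + 1`. -/
theorem Layered.access (hT : G.IsTree) (hp : IsPar G r par) (hr : 2 < deg G r) {h : ℕ}
    (h1 : c1 G + 1 ≤ h) (h2 : c2 G + 2 ≤ h) {W : Finset V} (hW : Layered G r W)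
    (hcard : 4 ≤ W.card) {l : V} (hl : l ∈ W) (hmax : ∀ x ∈ W, G.dist r x ≤ G.dist r l) :
    1 ≤ G.dist r l ∧ Access G W h l := by
  have hfull : ∀ v, G.dist r v + 1 < G.dist r l →
      (W.filter fun y => G.Adj v y).card = deg G v := by
    intro v hv
    rw [deg, ← Set.ncard_coe_finset]
    congr 1
    ext y
    simp only [Finset.coe_filter, Set.mem_ofPred_eq, SimpleGraph.mem_neighborSet,
      and_iff_right_iff_imp]
    intro hy
    have := hT.dist_eq_dist_add_one_of_adj r hy
    exact hW.2 l hl y (by omega)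
  have hle : ∀ v, (W.filter fun y => G.Adj v y).card ≤ deg G v := by
    intro v
    rw [deg, ← Set.ncard_coe_finset]
    refine Set.ncard_le_ncard (fun y hy => ?_) (Set.toFinite _)
    simp at hy
    exact hy.2
  have herase : 3 ≤ (W.erase r).card := by
    rw [Finset.card_erase_of_mem hW.1]; omega
  have hd : 1 ≤ G.dist r l := by
    obtain ⟨x, hx⟩ : (W.erase r).Nonempty := by rw [← Finset.card_pos]; omega
    rw [Finset.mem_erase] at hx
    have h3 := hmax x hx.2
    have h4 : G.dist r x ≠ 0 := fun h => hx.1 ((dist_root_eq_zero hT).1 h)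
    omega
  refine ⟨hd, ?_⟩
  have hroot : 3 ≤ (W.filter fun y => G.Adj r y).card := by
    by_cases hd1 : G.dist r l = 1
    · refine herase.trans (Finset.card_le_card fun x hx => ?_)
      rw [Finset.mem_erase] at hx
      have h3 := hmax x hx.2
      have h4 : G.dist r x ≠ 0 := fun h => hx.1 ((dist_root_eq_zero hT).1 h)
      rw [Finset.mem_filter, ← SimpleGraph.dist_eq_one_iff_adj]
      exact ⟨hx.2, by omega⟩
    · rw [hfull r (by rw [SimpleGraph.dist_self]; omega)]
      exact hr
  have hex : ∃ k, 1 ≤ k ∧ 3 ≤ (W.filter fun y => G.Adj (par^[k] l) y).card := by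
    refine ⟨G.dist r l, hd, ?_⟩
    have : par^[G.dist r l] l = r := by
      rw [← dist_root_eq_zero hT (r := r)]
      have := hp.dist_iterate (G.dist r l) l le_rfl
      omega
    rwa [this]
  obtain ⟨k, ⟨hk1, hk3⟩, hkmin, hkd⟩ : ∃ k, (1 ≤ k ∧
      3 ≤ (W.filter fun y => G.Adj (par^[k] l) y).card) ∧ (∀ i, 0 < i → i < k →
      (W.filter fun y => G.Adj (par^[i] l) y).card < 3) ∧ k ≤ G.dist r l := by
    refine ⟨Nat.find hex, Nat.find_spec hex, fun i hi hik => ?_, Nat.find_min' hex ⟨hd, ?_⟩⟩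
    · have := Nat.find_min hex hik
      by_contra! hc
      exact this ⟨hi, hc⟩
    · have : par^[G.dist r l] l = r := by
        rw [← dist_root_eq_zero hT (r := r)]
        have := hp.dist_iterate (G.dist r l) l le_rfl
        omega
      rwa [this]
  have hdeg2 : ∀ i, 0 < i → i < k → 2 ≤ deg G (par^[i] l) := by
    intro i hi hik
    obtain ⟨i, rfl⟩ := Nat.exists_eq_add_of_le' hi
    refine two_le_deg (hp.adj_iterate (k := i) (by omega)).symm
      (hp.adj_iterate (k := i + 1) (by omega)) fun e => ?_
    have e1 := hp.dist_iterate i l (by omega)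
    have e2 := hp.dist_iterate (i + 1 + 1) l (by omega)
    rw [← e] at e2
    omega
  have hint : ∀ i, 2 ≤ i → i < k → deg G (par^[i] l) = 2 := by
    intro i hi hik
    have e := hp.dist_iterate i l (by omega)
    have := hfull (par^[i] l) (by omega)
    have := hkmin i (by omega) hik
    have := hdeg2 i (by omega) hik
    omega
  have hj3 : 2 < deg G (par^[k] l) := lt_of_lt_of_le hk3 (hle _)
  have hkh : k + 1 ≤ h := by
    by_cases hk : k = 1
    · omega
    by_cases hx : deg G (par^[1] l) = 2
    · have := hp.le_c1 hT (Fintype.card V) l k (by omega) hk1 hkd (fun i hi hik => by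
        by_cases hi1 : i = 1
        · subst hi1; exact hx
        · exact hint i (by omega) hik) (by omega)
      omega
    · have e := hp.dist_iterate 1 l hd
      have := hdeg2 1 one_pos (by omega)
      have hit : ∀ i, par^[i] (par^[1] l) = par^[i + 1] l := fun i => by
        rw [Function.iterate_add_apply]
      have hk' : k - 1 + 1 = k := by omega
      obtain ⟨w, hw, hwl⟩ := hp.isCorridor (v := par^[1] l) (k := k - 1) (by omega) (by omega) hx
        (by rw [hit, hk']; omega)
        (fun i hi hik => by rw [hit]; exact hint (i + 1) (by omega) (by omega))
      have := length_le_c2 hw (by omega) (by rw [hit, hk']; exact hj3)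
      omega
  obtain ⟨w, -, hwl, hws⟩ := hp.exists_path k l hkd
  obtain ⟨a, ha, b, hb, hab⟩ := Finset.one_lt_card.1
    (show 1 < ((W.filter fun y => G.Adj (par^[k] l) y).erase (par^[k - 1] l)).card by
      have := Finset.pred_card_le_card_erase
        (s := W.filter fun y => G.Adj (par^[k] l) y) (a := par^[k - 1] l)
      omega)
  rw [Finset.mem_erase, Finset.mem_filter] at ha hb
  have hek := hp.dist_iterate k l hkd
  -- the only neighbour of the ancestor on the path is the last-but-one vertex
  have hoff : ∀ y, y ≠ par^[k - 1] l → G.Adj (par^[k] l) y → y ∉ w.support := by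
    intro y hy hadj hys
    obtain ⟨i, hi, rfl⟩ := hws y hys
    have ei := hp.dist_iterate i l (by omega)
    have := hT.dist_eq_dist_add_one_of_adj r hadj
    have : i = k - 1 := by omega
    exact hy (by rw [this])
  refine ⟨par^[k] l, a, b, w, fun e => ?_, by omega, fun x hx => ?_, ha.2.1, hb.2.1, ha.2.2,
    hb.2.2, hab, hoff a ha.1 ha.2.2, hoff b hb.1 hb.2.2⟩
  · rw [e] at hek; omega
  · obtain ⟨i, hi, rfl⟩ := hws x hx
    by_cases h0 : i = 0
    · subst h0; exact hl
    · have := hp.dist_iterate i l (by omega)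
      exact hW.2 l hl _ (by omega)

/-! ### Path graphs -/

/-- A path graph has at most `c₁ + 1` vertices: if it has at least two, the path is itself a
corridor. -/
theorem card_le_of_isPathGraph (hT : G.IsTree) (hG : IsPathGraph G) :
    Fintype.card V ≤ c1 G + 1 := by
  obtain ⟨a, b, p, hp, hall⟩ := hG
  have hcard : Fintype.card V ≤ p.length + 1 := by
    rw [← SimpleGraph.Walk.length_support, ← Finset.card_univ]
    refine (Finset.card_le_card (t := p.support.toFinset) fun x _ => ?_).trans
      (List.toFinset_card_le _)
    simpa using hall x
  by_cases h0 : p.length = 0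
  · omega
  have hidx : ∀ x, ∃ i ≤ p.length, x = p.getVert i := by
    intro x
    obtain ⟨i, hi, hle⟩ := SimpleGraph.Walk.mem_support_iff_exists_getVert.1 (hall x)
    exact ⟨i, hle, hi.symm⟩
  have hdist : ∀ i ≤ p.length, G.dist a (p.getVert i) = i := by
    intro i hi
    rw [dist_eq_length_of_isPath hT (p.take i) (hp.take i), SimpleGraph.Walk.take_length]
    omega
  have hadj : ∀ i ≤ p.length, ∀ j ≤ p.length,
      G.Adj (p.getVert i) (p.getVert j) ↔ i = j + 1 ∨ j = i + 1 := by
    intro i hi j hj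
    constructor
    · intro h
      have := hT.dist_eq_dist_add_one_of_adj a h
      rwa [hdist i hi, hdist j hj] at this
    · rintro (rfl | rfl)
      · exact (p.adj_getVert_succ (by omega)).symm
      · exact p.adj_getVert_succ (by omega)
  have hend : ∀ i ≤ p.length, ∀ j ≤ p.length,
      (∀ k ≤ p.length, (i = k + 1 ∨ k = i + 1) → k = j) → deg G (p.getVert i) ≠ 2 := by
    intro i hi j hj hu
    have : deg G (p.getVert i) ≤ 1 := by
      rw [deg, ← Set.ncard_singleton (p.getVert j)]
      refine Set.ncard_le_ncard (fun y hy => ?_) (Set.toFinite _)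
      obtain ⟨k, hk, rfl⟩ := hidx y
      rw [hu k hk ((hadj i hi k hk).1 hy)]
      rfl
    omega
  have hcor : IsCorridor G p := by
    refine ⟨hp, by omega, ?_, ?_, fun x _ hxa hxb => ?_⟩
    · have := hend 0 (by omega) 1 (by omega) (fun k _ _ => by omega)
      rwa [SimpleGraph.Walk.getVert_zero] at this
    · have := hend p.length le_rfl (p.length - 1) (by omega) (fun k _ _ => by omega)
      rwa [SimpleGraph.Walk.getVert_length] at this
    · obtain ⟨i, hi, rfl⟩ := hidx x
      have hi0 : i ≠ 0 := by rintro rfl; exact hxa (by simp)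
      have hin : i ≠ p.length := by rintro rfl; exact hxb (by simp)
      have hne : p.getVert (i - 1) ≠ p.getVert (i + 1) := by
        intro e
        have e1 := hdist (i - 1) (by omega)
        have e2 := hdist (i + 1) (by omega)
        rw [e] at e1
        omega
      rw [deg, ← Set.ncard_pair hne]
      congr 1
      ext y
      obtain ⟨k, hk, rfl⟩ := hidx y
      rw [SimpleGraph.mem_neighborSet, hadj i hi k hk, Set.mem_insert_iff, Set.mem_singleton_iff]
      constructor
      · rintro (h | h)
        · left; congr 1; omega
        · right; rw [h]
      · rintro (h | h)
        · have e1 := congrArg (G.dist a) h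
          rw [hdist _ hk, hdist _ (by omega)] at e1
          omega
        · have e1 := congrArg (G.dist a) h
          rw [hdist _ hk, hdist _ (by omega)] at e1
          omega
  have := length_le_c1 hcor
  omega

/-- A tree without junctions is a path: a longest path covers it, since a missed neighbour of the
path would prolong it or be the third neighbour of an internal vertex. -/
theorem exists_junction (hT : G.IsTree) (hG : ¬ IsPathGraph G) : ∃ v, 2 < deg G v := by
  by_contra! hdeg
  have : Nonempty V := hT.connected.nonempty
  obtain ⟨a, b, p, hp, hmax⟩ := SimpleGraph.Walk.exists_isPath_forall_isPath_length_le_length G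
  refine hG ⟨a, b, p, hp, fun x => ?_⟩
  by_contra hx
  obtain ⟨q⟩ := hT.connected.preconnected a x
  obtain ⟨d, -, hd1, hd2⟩ := q.exists_boundary_dart {y | y ∈ p.support} p.start_mem_support hx
  obtain ⟨i, hi, hle⟩ := SimpleGraph.Walk.mem_support_iff_exists_getVert.1 hd1
  have hadj : G.Adj (p.getVert i) d.snd := by rw [hi]; exact d.adj
  have hd2' : d.snd ∉ p.support := hd2
  by_cases h0 : i = 0
  · subst h0
    rw [SimpleGraph.Walk.getVert_zero] at hadj
    have := hmax _ _ _ (hp.cons (h := hadj.symm) hd2')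
    rw [SimpleGraph.Walk.length_cons] at this
    omega
  by_cases hn : i = p.length
  · subst hn
    rw [SimpleGraph.Walk.getVert_length] at hadj
    have := hmax _ _ _ (hp.concat hd2' hadj)
    rw [SimpleGraph.Walk.length_concat] at this
    omega
  have h1 : G.Adj (p.getVert i) (p.getVert (i + 1)) := p.adj_getVert_succ (by omega)
  have h2 : G.Adj (p.getVert i) (p.getVert (i - 1)) := by
    have := p.adj_getVert_succ (i := i - 1) (by omega)
    rw [Nat.sub_add_cancel (by omega)] at this
    exact this.symm
  have hne : p.getVert (i - 1) ≠ p.getVert (i + 1) := fun e => by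
    have := hp.getVert_injOn (x₁ := i - 1) (x₂ := i + 1) (by simp; omega) (by simp; omega) e
    omega
  have h3 : 3 ≤ deg G (p.getVert i) := by
    have hc : ({d.snd, p.getVert (i - 1), p.getVert (i + 1)} : Set V).ncard = 3 := by
      refine Set.ncard_eq_three.2 ⟨_, _, _, ?_, ?_, hne, rfl⟩
      · intro e; exact hd2' (by rw [e]; exact p.getVert_mem_support _)
      · intro e; exact hd2' (by rw [e]; exact p.getVert_mem_support _)
    rw [deg, ← hc]
    refine Set.ncard_le_ncard ?_ (Set.toFinite _)
    rintro z (rfl | rfl | rfl) <;> assumption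
  exact absurd (hdeg (p.getVert i)) (by omega)

end Tree

end PMT

/-- the assumption `|H| ≥ c(T)` is sufficient for the feasibility of every
pebble motion instance on a tree. -/
theorem pmt_feasibility {V P H : Type} [Fintype V] [Fintype P] [Fintype H]
    (G : SimpleGraph V) (hT : G.IsTree)
    (hcard : Fintype.card V = Fintype.card P + Fintype.card H)
    (hH : PMT.cT G ≤ Fintype.card H)
    (As At : PMT.Config P H V) :
    ∃ (f : List (V × V)) (B : PMT.Config P H V),
      PMT.applyPlan G As f = some B ∧
      ∀ p : P, B (Sum.inl p) = At (Sum.inl p) := by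
  classical
  have : Nonempty V := hT.connected.nonempty
  have hconn : PMT.Conn G Finset.univ := fun u _ v _ => by
    obtain ⟨w⟩ := hT.connected.preconnected u v
    exact ⟨w, fun x _ => Finset.mem_univ x⟩
  refine PMT.exists_plan As (fun p => At (Sum.inl p)) (PMT.reach_of_exch hconn ?_ _ _
    (fun x y e => Sum.inl_injective (As.injective e))
    (fun x y e => Sum.inl_injective (At.injective e)))
  intro g hg p q hpq
  have hP : 1 < Fintype.card P := Fintype.one_lt_card_iff.2 ⟨p, q, hpq⟩
  by_cases hpath : PMT.IsPathGraph G
  · -- on a path graph there is room for at most one pebble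
    rw [PMT.cT, if_pos hpath] at hH
    have := PMT.card_le_of_isPathGraph hT hpath
    omega
  · rw [PMT.cT, if_neg hpath, max_le_iff] at hH
    obtain ⟨r, hr⟩ := PMT.exists_junction hT hpath
    obtain ⟨par, hpar⟩ := PMT.exists_par hT r
    refine PMT.exch_of_family (h := Fintype.card H) (by omega) (PMT.Layered G r)
      (fun W hW => hW.conn hT hpar) (fun W hW h4 => ?_) _ Finset.univ rfl
      ⟨Finset.mem_univ _, fun _ _ _ _ => Finset.mem_univ _⟩ g hg ?_ p q hpq
      (Finset.mem_univ _) (Finset.mem_univ _)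
    · obtain ⟨l, hl, hmax⟩ := W.exists_max_image (G.dist r) ⟨r, hW.1⟩
      obtain ⟨hd, hacc⟩ := hW.access hT hpar hr hH.1 hH.2 h4 hl hmax
      refine ⟨l, hl, hacc, Finset.mem_erase.2 ⟨(PMT.ne_root_of_pos hd).symm, hW.1⟩,
        fun x hx y hy => Finset.mem_erase.2 ⟨?_, hW.2 x (Finset.mem_of_mem_erase hx) y hy⟩⟩
      rintro rfl
      have := hmax x (Finset.mem_of_mem_erase hx)
      omega
    · simp only [Finset.mem_univ, Finset.filter_true, Finset.card_univ]
      omega
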